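/- arXiv:1105.1865 — 3 statements merged into one kernel-verified Lean document; each statement's English description precedes it below -/
import Mathlib

section
/- With $f$, $t_+$ as in the context: $\dfrac{1}{f'(t_+(x))} = \dfrac{1}{\sqrt{x}} - \dfrac{4 f'''(0)}{3} + O(\sqrt{x})$ as $x \to 0^+$. (This quantity is the derivative $r_{x_2}$ of the distance $r$ from $(0,x)$ to the boundary graph in the direction $(1,0)$.) -/
open Filter Topology Asymptotics

/-!
Put `u = t - x₀`, `a = f''(x₀) > 0` and `c = f'''(x₀)`. Taylor's formula gives
`f'(t) = a u + (c / 2) u² + O(u³)` and `2 a (f(t) - f(x₀)) = a² u² + (a c / 3) u³ + O(u⁴)`; the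
square root of the latter is `a u + (c / 6) u² + O(u³)`. Since `1 / (a u + b u² + O(u³))` is
`1 / (a u) - b / a² + O(u)`, the singular terms of `1 / f'(t)` and `1 / √(2 a (f(t) - f(x₀)))` agree
and the constant terms differ by `-(c / 2 - c / 6) / a² = -c / (3 a²)`.
-/

section Taylor

variable {E : Type*} [NormedAddCommGroup E] [NormedSpace ℝ E]

theorem isBigO_sub_taylor_of_contDiffAt {f : ℝ → E} {x₀ : ℝ} {n : ℕ}
    (hf : ContDiffAt ℝ (n + 1 : ℕ) f x₀) :
    (fun x ↦ f x - ∑ k ∈ Finset.range (n + 1),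
        ((k.factorial : ℝ)⁻¹ * (x - x₀) ^ k) • iteratedDeriv k f x₀)
      =O[𝓝 x₀] fun x ↦ (x - x₀) ^ (n + 1) := by
  obtain ⟨s, hs, hfs⟩ := hf.contDiffOn le_rfl (by simp)
  obtain ⟨ε, hε, hεs⟩ := Metric.mem_nhds_iff.1 (by simpa using hs)
  have hx₀ : x₀ ∈ Metric.ball x₀ ε := Metric.mem_ball_self hε
  have hlittle := taylor_isLittleO (convex_ball x₀ ε) hx₀ (hfs.mono hεs)
  rw [Metric.isOpen_ball.nhdsWithin_eq hx₀] at hlittle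
  have htop : (fun x ↦ (((n + 1).factorial : ℝ)⁻¹ * (x - x₀) ^ (n + 1)) •
      iteratedDeriv (n + 1) f x₀) =O[𝓝 x₀] fun x ↦ (x - x₀) ^ (n + 1) := by
    refine IsBigO.of_bound (‖((n + 1).factorial : ℝ)⁻¹‖ * ‖iteratedDeriv (n + 1) f x₀‖)
      (.of_forall fun x ↦ le_of_eq ?_)
    rw [norm_smul, norm_mul]
    ring
  refine (hlittle.isBigO.add htop).congr_left fun x ↦ ?_
  simp only [taylor_within_apply, iteratedDerivWithin_of_isOpen Metric.isOpen_ball hx₀]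
  rw [Finset.sum_range_succ]
  abel

end Taylor

section Expansions

variable {α 𝕜 : Type*} [NormedField 𝕜] {l : Filter α}

theorem isTheta_of_isBigO_sub_quadratic {u F : α → 𝕜} {a b : 𝕜} (ha : a ≠ 0)
    (hu : Tendsto u l (𝓝 0))
    (hF : (fun i ↦ F i - (a * u i + b * u i ^ 2)) =O[l] fun i ↦ u i ^ 3) :
    F =Θ[l] u := by
  have hpow {n : ℕ} (hn : 1 < n) : (fun i ↦ u i ^ n) =o[l] u :=
    (isLittleO_pow_id hn).comp_tendsto hu
  have hequiv : F ~[l] fun i ↦ a * u i := by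
    have hlin : (fun i ↦ F i - a * u i) =o[l] u :=
      ((hF.trans_isLittleO (hpow (by norm_num))).add
        ((hpow one_lt_two).const_mul_left b)).congr_left fun i ↦ by ring
    exact hlin.trans_isTheta ((isTheta_const_mul_left ha).2 isTheta_rfl).symm
  exact hequiv.isTheta.trans ((isTheta_const_mul_left ha).2 isTheta_rfl)

theorem isBigO_inv_sub_of_isBigO_sub_quadratic {u F : α → 𝕜} {a b : 𝕜} (ha : a ≠ 0)
    (hu : Tendsto u l (𝓝[≠] 0))
    (hF : (fun i ↦ F i - (a * u i + b * u i ^ 2)) =O[l] fun i ↦ u i ^ 3) :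
    (fun i ↦ (F i)⁻¹ - ((a * u i)⁻¹ - b / a ^ 2)) =O[l] u := by
  obtain ⟨hu0, hune⟩ := tendsto_nhdsWithin_iff.1 hu
  have hFu : F =Θ[l] u := isTheta_of_isBigO_sub_quadratic ha hu0 hF
  have hnum : (fun i ↦ b ^ 2 * u i ^ 3 - (a - b * u i) * (F i - (a * u i + b * u i ^ 2)))
      =O[l] fun i ↦ u i ^ 3 := by
    have hbounded : (fun i ↦ a - b * u i) =O[l] fun _ ↦ (1 : 𝕜) :=
      (tendsto_const_nhds.sub (hu0.const_mul b)).isBigO_one 𝕜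
    simpa using ((isBigO_refl _ l).const_mul_left (b ^ 2)).sub (hbounded.mul hF)
  have hden : (fun i ↦ (a ^ 2 * (u i * F i))⁻¹) =O[l] fun i ↦ (u i * u i)⁻¹ :=
    ((isTheta_const_mul_left (pow_ne_zero 2 ha)).2 (isTheta_rfl.mul hFu)).inv.isBigO
  refine (hnum.mul hden).congr' ?_ ?_
  · filter_upwards [hune, hFu.eq_zero_iff] with i (hui : u i ≠ 0) hFi
    have hFne : F i ≠ 0 := mt hFi.1 hui
    field_simp
    ring
  · filter_upwards [hune] with i (hui : u i ≠ 0)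
    field_simp

theorem abs_sqrt_sub_le_div (g : ℝ) {p : ℝ} (hp : 0 < p) : |√g - p| ≤ |g - p ^ 2| / p := by
  rw [le_div_iff₀ hp]
  rcases le_total 0 g with hg | hg
  · calc |√g - p| * p ≤ |√g - p| * |√g + p| := by
          gcongr
          exact (le_add_of_nonneg_left (Real.sqrt_nonneg g)).trans (le_abs_self _)
      _ = |g - p ^ 2| := by
          rw [← abs_mul, mul_comm, ← sq_sub_sq, Real.sq_sqrt hg]
  · rw [Real.sqrt_eq_zero_of_nonpos hg, zero_sub, abs_neg, abs_of_pos hp, abs_sub_comm]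
    exact (by linarith [sq p] : p * p ≤ p ^ 2 - g).trans (le_abs_self _)

theorem isBigO_sqrt_sub_quadratic {u g : α → ℝ} {a b : ℝ} (ha : 0 < a)
    (hu : Tendsto u l (𝓝[>] 0))
    (hg : (fun i ↦ g i - (a ^ 2 * u i ^ 2 + 2 * a * b * u i ^ 3)) =O[l] fun i ↦ u i ^ 4) :
    (fun i ↦ √(g i) - (a * u i + b * u i ^ 2)) =O[l] fun i ↦ u i ^ 3 := by
  obtain ⟨hu0, hupos⟩ := tendsto_nhdsWithin_iff.1 hu
  set p : α → ℝ := fun i ↦ a * u i + b * u i ^ 2 with hp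
  have hpu : p =Θ[l] u :=
    isTheta_of_isBigO_sub_quadratic ha.ne' hu0
      ((isBigO_zero _ l).congr_left fun i ↦ (sub_self (p i)).symm)
  have hppos : ∀ᶠ i in l, 0 < p i := by
    have hlim : Tendsto (fun i ↦ a + b * u i) l (𝓝 a) := by
      simpa using (hu0.const_mul b).const_add a
    filter_upwards [hupos, hlim.eventually_const_lt ha] with i hui hi
    calc 0 < u i * (a + b * u i) := mul_pos hui hi
      _ = p i := by simp only [hp]; ring
  have hsq : (fun i ↦ g i - p i ^ 2) =O[l] fun i ↦ u i ^ 4 :=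
    (hg.sub ((isBigO_refl _ l).const_mul_left (b ^ 2))).congr_left fun i ↦ by
      simp only [hp]; ring
  calc (fun i ↦ √(g i) - p i) =O[l] fun i ↦ (g i - p i ^ 2) / p i := by
        refine IsBigO.of_bound' (hppos.mono fun i hi ↦ ?_)
        simpa [abs_div, abs_of_pos hi] using abs_sqrt_sub_le_div (g i) hi
    _ =O[l] fun i ↦ u i ^ 4 / u i := by
        simpa only [div_eq_mul_inv] using hsq.mul hpu.inv.isBigO
    _ =ᶠ[l] fun i ↦ u i ^ 3 := by
        filter_upwards [hupos] with i (hui : 0 < u i)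
        field_simp

end Expansions

theorem tendsto_sub_nhdsGT_zero {G : Type*} [AddCommGroup G] [PartialOrder G]
    [IsOrderedAddMonoid G] [TopologicalSpace G] [IsTopologicalAddGroup G] (x₀ : G) :
    Tendsto (fun x ↦ x - x₀) (𝓝[>] x₀) (𝓝[>] 0) := by
  rw [Tendsto, Filter.map_subRight_nhdsGT, sub_self]

section CriticalPoint

variable {f : ℝ → ℝ} {x₀ : ℝ}

theorem isBigO_deriv_sub_taylor_of_deriv_eq_zero (hf : ContDiffAt ℝ 4 f x₀)
    (hf1 : deriv f x₀ = 0) :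
    (fun t ↦ deriv f t - (deriv (deriv f) x₀ * (t - x₀)
        + deriv (deriv (deriv f)) x₀ / 2 * (t - x₀) ^ 2))
      =O[𝓝 x₀] fun t ↦ (t - x₀) ^ 3 := by
  have hf' : ContDiffAt ℝ (2 + 1 : ℕ) (deriv f) x₀ := hf.derivWithin (by norm_num)
  refine (isBigO_sub_taylor_of_contDiffAt hf').congr_left fun t ↦ ?_
  simp only [Finset.sum_range_succ, Finset.sum_range_zero, iteratedDeriv_succ, iteratedDeriv_zero,
    hf1, Nat.factorial, smul_eq_mul]
  push_cast
  ring

theorem isBigO_sub_taylor_of_deriv_eq_zero (hf : ContDiffAt ℝ 4 f x₀) (hf1 : deriv f x₀ = 0) :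
    (fun t ↦ f t - f x₀ - (deriv (deriv f) x₀ / 2 * (t - x₀) ^ 2
        + deriv (deriv (deriv f)) x₀ / 6 * (t - x₀) ^ 3))
      =O[𝓝 x₀] fun t ↦ (t - x₀) ^ 4 := by
  have hf : ContDiffAt ℝ (3 + 1 : ℕ) f x₀ := hf
  refine (isBigO_sub_taylor_of_contDiffAt hf).congr_left fun t ↦ ?_
  simp only [Finset.sum_range_succ, Finset.sum_range_zero, iteratedDeriv_succ, iteratedDeriv_zero,
    hf1, Nat.factorial, smul_eq_mul]
  push_cast
  ring

theorem isBigO_sqrt_sub_taylor_of_deriv_eq_zero (hf : ContDiffAt ℝ 4 f x₀) (hf1 : deriv f x₀ = 0)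
    (hf2 : 0 < deriv (deriv f) x₀) :
    (fun t ↦ √(2 * deriv (deriv f) x₀ * (f t - f x₀)) - (deriv (deriv f) x₀ * (t - x₀)
        + deriv (deriv (deriv f)) x₀ / 6 * (t - x₀) ^ 2))
      =O[𝓝[>] x₀] fun t ↦ (t - x₀) ^ 3 := by
  refine isBigO_sqrt_sub_quadratic hf2 (tendsto_sub_nhdsGT_zero x₀) ?_
  refine (((isBigO_sub_taylor_of_deriv_eq_zero hf hf1).mono nhdsWithin_le_nhds).const_mul_left
    (2 * deriv (deriv f) x₀)).congr_left fun t ↦ ?_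
  ring

theorem sub_isBigO_sqrt_sub_of_deriv_eq_zero (hf : ContDiffAt ℝ 4 f x₀) (hf1 : deriv f x₀ = 0)
    (hf2 : 0 < deriv (deriv f) x₀) :
    (fun t ↦ t - x₀) =O[𝓝[>] x₀] fun t ↦ √(f t - f x₀) := by
  have hu0 := (tendsto_sub_nhdsGT_zero x₀).mono_right nhdsWithin_le_nhds
  have htheta := isTheta_of_isBigO_sub_quadratic hf2.ne' hu0
    (isBigO_sqrt_sub_taylor_of_deriv_eq_zero hf hf1 hf2)
  refine htheta.symm.isBigO.trans ?_
  simp only [Real.sqrt_mul (by positivity : 0 ≤ 2 * deriv (deriv f) x₀)]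
  exact isBigO_const_mul_self _ _ _

theorem isBigO_inv_deriv_sub_inv_sqrt (hf : ContDiffAt ℝ 4 f x₀) (hf1 : deriv f x₀ = 0)
    (hf2 : 0 < deriv (deriv f) x₀) :
    (fun t ↦ 1 / deriv f t - (1 / √(2 * deriv (deriv f) x₀ * (f t - f x₀))
        - deriv (deriv (deriv f)) x₀ / (3 * deriv (deriv f) x₀ ^ 2)))
      =O[𝓝[>] x₀] fun t ↦ √(f t - f x₀) := by
  have hu := (tendsto_sub_nhdsGT_zero x₀).mono_right (nhdsGT_le_nhdsNE 0)
  have hinv_deriv := isBigO_inv_sub_of_isBigO_sub_quadratic hf2.ne' hu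
    ((isBigO_deriv_sub_taylor_of_deriv_eq_zero hf hf1).mono nhdsWithin_le_nhds)
  have hinv_sqrt := isBigO_inv_sub_of_isBigO_sub_quadratic hf2.ne' hu
    (isBigO_sqrt_sub_taylor_of_deriv_eq_zero hf hf1 hf2)
  refine ((hinv_deriv.sub hinv_sqrt).congr_left fun t ↦ ?_).trans
    (sub_isBigO_sqrt_sub_of_deriv_eq_zero hf hf1 hf2)
  ring

end CriticalPoint

theorem stmt_8_general (f tp : ℝ → ℝ) (x₀ : ℝ) (hf : ContDiffAt ℝ 4 f x₀)
    (hf1 : deriv f x₀ = 0) (hf2 : 0 < deriv (deriv f) x₀)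
    (htp : ∀ᶠ x in 𝓝[>] (0 : ℝ), x₀ < tp x ∧ f (tp x) = f x₀ + x)
    (htp0 : Tendsto tp (𝓝[>] (0 : ℝ)) (𝓝 x₀)) :
    (fun x ↦ 1 / deriv f (tp x) - (1 / √(2 * deriv (deriv f) x₀ * x)
        - deriv (deriv (deriv f)) x₀ / (3 * deriv (deriv f) x₀ ^ 2)))
      =O[𝓝[>] (0 : ℝ)] fun x ↦ √x := by
  have htp_right : Tendsto tp (𝓝[>] 0) (𝓝[>] x₀) :=
    tendsto_nhdsWithin_iff.2 ⟨htp0, htp.mono fun _ hx ↦ hx.1⟩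
  have hvalue : ∀ᶠ x in 𝓝[>] (0 : ℝ), f (tp x) - f x₀ = x :=
    htp.mono fun _ hx ↦ sub_eq_of_eq_add' hx.2
  refine ((isBigO_inv_deriv_sub_inv_sqrt hf hf1 hf2).comp_tendsto htp_right).congr' ?_ ?_ <;>
    filter_upwards [hvalue] with x hx <;> simp only [Function.comp_apply, hx]

theorem stmt_8 (f tp tm : ℝ → ℝ)
    (hf : ContDiffAt ℝ 4 f 0)
    (hf0 : f 0 = 0) (hf1 : deriv f 0 = 0) (hf2 : deriv (deriv f) 0 = 1/2)
    (hfpos : ∀ᶠ t in 𝓝 (0:ℝ), 0 < deriv (deriv f) t)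
    (htp : ∀ᶠ x in 𝓝[>] (0:ℝ), 0 < tp x ∧ f (tp x) = x)
    (htm : ∀ᶠ x in 𝓝[>] (0:ℝ), tm x < 0 ∧ f (tm x) = x)
    (htp0 : Tendsto tp (𝓝[>] (0:ℝ)) (𝓝 0))
    (htm0 : Tendsto tm (𝓝[>] (0:ℝ)) (𝓝 0)) :
    (fun x => 1 / deriv f (tp x) - (1 / Real.sqrt x - 4 * deriv (deriv (deriv f)) 0 / 3))
      =O[𝓝[>] (0:ℝ)] fun x => Real.sqrt x := by
  refine (stmt_8_general f tp 0 hf hf1 (by norm_num [hf2]) (by simpa [hf0] using htp)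
    htp0).congr_left fun x ↦ ?_
  rw [hf2, show (2 * (1 / 2) * x : ℝ) = x by ring]
  ring
end

section
/- With $f$, $t_+$ as in the context: $\dfrac{1}{t_+(x)^2} = \dfrac{1}{4x} + \dfrac{f'''(0)}{3\sqrt{x}} + O(1)$ as $x \to 0^+$. (This quantity is the derivative $\Theta_{x_1}((0,x),(1,0))$ of the Funk metric.) -/
open Filter Topology Asymptotics

/-!
Write `f t = a t² + b t³ + O(t⁴)` with `a = f''(0) / 2 > 0` and `b = f'''(0) / 6`. Taking square
roots, `√(f t) = √a t + O(t²)`, and the exact identity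
`1 / t² - a / f - b / (√a √f) = (f - a t² - b t³) / (f t²) - b (√f - √a t) / (√a f)`
exhibits the error as a sum of two quotients whose denominators are of order `t⁴` and `t²`, hence
as `O(1)`. Substituting `t = t₊(x)` turns `f t` into `x`.
-/

section Taylor

variable {E : Type*} [NormedAddCommGroup E] [NormedSpace ℝ E]

lemma taylorWithinEval_eq_univ_of_isOpen (f : ℝ → E) (n : ℕ) {s : Set ℝ} (hs : IsOpen s) {x₀ : ℝ}
    (hx₀ : x₀ ∈ s) : taylorWithinEval f n s x₀ = taylorWithinEval f n Set.univ x₀ := by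
  ext x
  simp only [taylor_within_apply, iteratedDerivWithin_of_isOpen hs hx₀, iteratedDerivWithin_univ]

lemma taylor_isBigO_of_contDiffAt {f : ℝ → E} {x₀ : ℝ} {n : ℕ}
    (hf : ContDiffAt ℝ (n + 1 : ℕ) f x₀) :
    (fun x ↦ f x - taylorWithinEval f n Set.univ x₀ x) =O[𝓝 x₀] fun x ↦ (x - x₀) ^ (n + 1) := by
  obtain ⟨r, hr, hball⟩ := Metric.eventually_nhds_iff_ball.1 (hf.eventually (by simp))
  have hx₀ : x₀ ∈ Metric.ball x₀ r := Metric.mem_ball_self hr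
  have hfOn : ContDiffOn ℝ (n + 1 : ℕ) f (Metric.ball x₀ r) :=
    fun x hx ↦ (hball x hx).contDiffWithinAt
  have next_order := (taylor_isLittleO (convex_ball x₀ r) hx₀ hfOn).isBigO
  rw [Metric.isOpen_ball.nhdsWithin_eq hx₀,
    taylorWithinEval_eq_univ_of_isOpen f _ Metric.isOpen_ball hx₀] at next_order
  have last_term : (fun x ↦ ((((n : ℝ) + 1) * n.factorial)⁻¹ * (x - x₀) ^ (n + 1)) •
      iteratedDerivWithin (n + 1) f Set.univ x₀) =O[𝓝 x₀] fun x ↦ (x - x₀) ^ (n + 1) := by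
    simpa using ((isBigO_refl (fun x ↦ (x - x₀) ^ (n + 1)) (𝓝 x₀)).const_mul_left
      (((n : ℝ) + 1) * n.factorial)⁻¹).smul
      (isBigO_const_const (iteratedDerivWithin (n + 1) f Set.univ x₀) (one_ne_zero (α := ℝ)) (𝓝 x₀))
  refine (next_order.add last_term).congr_left fun x ↦ ?_
  rw [taylorWithinEval_succ]
  abel

end Taylor

lemma isBigO_sub_cubic_of_contDiffAt {f : ℝ → ℝ} (hf : ContDiffAt ℝ 4 f 0) (hf0 : f 0 = 0)
    (hf1 : deriv f 0 = 0) :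
    (fun t ↦ f t - (deriv (deriv f) 0 / 2 * t ^ 2 + deriv (deriv (deriv f)) 0 / 6 * t ^ 3))
      =O[𝓝 0] fun t ↦ t ^ 4 := by
  refine (taylor_isBigO_of_contDiffAt (n := 3) (by exact_mod_cast hf)).congr (fun t ↦ ?_) (by simp)
  simp only [taylor_within_apply, iteratedDerivWithin_univ, Finset.sum_range_succ,
    Finset.sum_range_zero, iteratedDeriv_succ, iteratedDeriv_zero, hf0, hf1, sub_zero, smul_eq_mul,
    Nat.factorial]
  push_cast
  ring

lemma abs_sqrt_sub_sqrt_mul_sqrt_le (u v : ℝ) : |√u - √v| * √v ≤ |u - v| := by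
  rcases le_total v 0 with hv | hv
  · simp [Real.sqrt_eq_zero_of_nonpos hv]
  rcases le_total u 0 with hu | hu
  · rw [Real.sqrt_eq_zero_of_nonpos hu, zero_sub, abs_neg, abs_of_nonneg (Real.sqrt_nonneg v),
      Real.mul_self_sqrt hv, abs_of_nonpos (by linarith)]
    linarith
  calc |√u - √v| * √v ≤ |√u - √v| * (√u + √v) := by
        gcongr
        linarith [Real.sqrt_nonneg u]
    _ = |(√u - √v) * (√u + √v)| := by
        rw [abs_mul, abs_of_nonneg (by positivity : 0 ≤ √u + √v)]
    _ = |u - v| := by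
        rw [mul_comm, ← sq_sub_sq, Real.sq_sqrt hu, Real.sq_sqrt hv]

lemma one_div_sq_sub_eq {a t x : ℝ} (b : ℝ) (ha : 0 < a) (ht : t ≠ 0) (hx : 0 < x) :
    1 / t ^ 2 - (a / x + b / (√a * √x)) =
      (x - (a * t ^ 2 + b * t ^ 3)) * (x⁻¹ * (t ^ 2)⁻¹) - b / √a * ((√x - √a * t) * x⁻¹) := by
  obtain ⟨s, hs, rfl⟩ : ∃ s, 0 < s ∧ x = s ^ 2 :=
    ⟨√x, Real.sqrt_pos.2 hx, (Real.sq_sqrt hx.le).symm⟩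
  rw [Real.sqrt_sq hs.le]
  field_simp
  ring

section Expansion

variable {f : ℝ → ℝ} {a b : ℝ}

lemma isBigO_sub_quadratic_of_isBigO_sub_cubic
    (hf : (fun t ↦ f t - (a * t ^ 2 + b * t ^ 3)) =O[𝓝[>] 0] fun t ↦ t ^ 4) :
    (fun t ↦ f t - a * t ^ 2) =O[𝓝[>] 0] fun t ↦ t ^ 3 := by
  have quartic_le_cubic : (fun t : ℝ ↦ t ^ 4) =O[𝓝[>] 0] fun t ↦ t ^ 3 :=
    (isLittleO_pow_pow (by norm_num)).isBigO.mono nhdsWithin_le_nhds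
  refine ((hf.trans quartic_le_cubic).add
    ((isBigO_refl (fun t : ℝ ↦ t ^ 3) _).const_mul_left b)).congr_left fun t ↦ ?_
  ring

lemma isEquivalent_quadratic (ha : a ≠ 0)
    (hf : (fun t ↦ f t - a * t ^ 2) =O[𝓝[>] 0] fun t ↦ t ^ 3) :
    f ~[𝓝[>] 0] fun t ↦ a * t ^ 2 := by
  have cubic_lt_quadratic : (fun t : ℝ ↦ t ^ 3) =o[𝓝[>] 0] fun t ↦ t ^ 2 :=
    (isLittleO_pow_pow (by norm_num)).mono nhdsWithin_le_nhds
  exact (hf.trans_isLittleO cubic_lt_quadratic).trans_isBigO (isBigO_self_const_mul ha _ _)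

lemma isBigO_sqrt_sub_linear (ha : 0 < a)
    (hf : (fun t ↦ f t - a * t ^ 2) =O[𝓝[>] 0] fun t ↦ t ^ 3) :
    (fun t ↦ √(f t) - √a * t) =O[𝓝[>] 0] fun t ↦ t ^ 2 := by
  have product_bound : (fun t ↦ (√(f t) - √a * t) * (√a * t)) =O[𝓝[>] 0] fun t ↦ t ^ 3 := by
    refine (IsBigO.of_bound' ?_).trans hf
    filter_upwards [self_mem_nhdsWithin] with t (ht : 0 < t)
    have sqrt_quadratic : √(a * t ^ 2) = √a * t := by
      rw [Real.sqrt_mul ha.le, Real.sqrt_sq ht.le]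
    rw [norm_mul, Real.norm_of_nonneg (by positivity : 0 ≤ √a * t), ← sqrt_quadratic]
    exact abs_sqrt_sub_sqrt_mul_sqrt_le (f t) (a * t ^ 2)
  have inv_bound : (fun t ↦ (√a * t)⁻¹) =O[𝓝[>] 0] fun t ↦ t⁻¹ := by
    simpa only [mul_inv] using (isBigO_refl (fun t : ℝ ↦ t⁻¹) _).const_mul_left (√a)⁻¹
  refine (product_bound.mul inv_bound).congr' ?_ ?_ <;>
    filter_upwards [self_mem_nhdsWithin] with t (ht : 0 < t) <;> field_simp

theorem isBigO_one_div_sq_sub (ha : 0 < a)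
    (hf : (fun t ↦ f t - (a * t ^ 2 + b * t ^ 3)) =O[𝓝[>] 0] fun t ↦ t ^ 4) :
    (fun t ↦ 1 / t ^ 2 - (a / f t + b / (√a * √(f t)))) =O[𝓝[>] 0] fun _ ↦ (1 : ℝ) := by
  have hquad := isBigO_sub_quadratic_of_isBigO_sub_cubic hf
  have hequiv := isEquivalent_quadratic ha.ne' hquad
  have hpos : ∀ᶠ t in 𝓝[>] 0, 0 < f t := hequiv.eventually_pos <| by
    filter_upwards [self_mem_nhdsWithin] with t (ht : 0 < t)
    positivity
  have hinv : (fun t ↦ (f t)⁻¹) =O[𝓝[>] 0] fun t ↦ (t ^ 2)⁻¹ :=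
    (hequiv.isTheta.trans ((isTheta_refl _ _).const_mul_left ha.ne')).inv.isBigO
  have remainder_term : (fun t ↦ (f t - (a * t ^ 2 + b * t ^ 3)) * ((f t)⁻¹ * (t ^ 2)⁻¹))
      =O[𝓝[>] 0] fun t ↦ t ^ 4 * ((t ^ 2)⁻¹ * (t ^ 2)⁻¹) :=
    hf.mul (hinv.mul (isBigO_refl _ _))
  have sqrt_term : (fun t ↦ b / √a * ((√(f t) - √a * t) * (f t)⁻¹))
      =O[𝓝[>] 0] fun t ↦ t ^ 2 * (t ^ 2)⁻¹ :=
    ((isBigO_sqrt_sub_linear ha hquad).mul hinv).const_mul_left _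
  refine ((remainder_term.trans_eventuallyEq ?_).sub
    (sqrt_term.trans_eventuallyEq ?_)).congr' ?_ .rfl
  · filter_upwards [self_mem_nhdsWithin] with t (ht : 0 < t)
    field_simp
  · filter_upwards [self_mem_nhdsWithin] with t (ht : 0 < t)
    field_simp
  · filter_upwards [self_mem_nhdsWithin, hpos] with t (ht : 0 < t) hft
    exact (one_div_sq_sub_eq b ha ht.ne' hft).symm

end Expansion

theorem stmt_10_general (f tp : ℝ → ℝ)
    (hf : ContDiffAt ℝ 4 f 0)
    (hf0 : f 0 = 0) (hf1 : deriv f 0 = 0) (hf2 : 0 < deriv (deriv f) 0)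
    (htp : ∀ᶠ x in 𝓝[>] (0 : ℝ), 0 < tp x ∧ f (tp x) = x)
    (htp0 : Tendsto tp (𝓝[>] (0 : ℝ)) (𝓝 0)) :
    (fun x ↦ 1 / tp x ^ 2 - (deriv (deriv f) 0 / 2 / x
        + deriv (deriv (deriv f)) 0 / 6 / (√(deriv (deriv f) 0 / 2) * √x)))
      =O[𝓝[>] (0 : ℝ)] fun _ ↦ (1 : ℝ) := by
  have cubic_expansion := (isBigO_sub_cubic_of_contDiffAt hf hf0 hf1).mono
    (nhdsWithin_le_nhds (s := Set.Ioi 0))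
  have htp_right : Tendsto tp (𝓝[>] 0) (𝓝[>] 0) :=
    tendsto_nhdsWithin_iff.2 ⟨htp0, htp.mono fun _ hx ↦ hx.1⟩
  refine ((isBigO_one_div_sq_sub (half_pos hf2) cubic_expansion).comp_tendsto htp_right).congr'
    ?_ .rfl
  filter_upwards [htp] with x hx
  simp only [Function.comp_apply, hx.2]

theorem stmt_10 (f tp tm : ℝ → ℝ)
    (hf : ContDiffAt ℝ 4 f 0)
    (hf0 : f 0 = 0) (hf1 : deriv f 0 = 0) (hf2 : deriv (deriv f) 0 = 1/2)
    (hfpos : ∀ᶠ t in 𝓝 (0:ℝ), 0 < deriv (deriv f) t)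
    (htp : ∀ᶠ x in 𝓝[>] (0:ℝ), 0 < tp x ∧ f (tp x) = x)
    (htm : ∀ᶠ x in 𝓝[>] (0:ℝ), tm x < 0 ∧ f (tm x) = x)
    (htp0 : Tendsto tp (𝓝[>] (0:ℝ)) (𝓝 0))
    (htm0 : Tendsto tm (𝓝[>] (0:ℝ)) (𝓝 0)) :
    (fun x => 1 / (tp x) ^ 2 - (1 / (4 * x) + deriv (deriv (deriv f)) 0 / (3 * Real.sqrt x)))
      =O[𝓝[>] (0:ℝ)] fun _ => (1:ℝ) := by
  have sqrt_quarter : √(1 / 2 / 2 : ℝ) = 1 / 2 := by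
    rw [show (1 / 2 / 2 : ℝ) = (1 / 2) ^ 2 by norm_num, Real.sqrt_sq (by norm_num)]
  refine (stmt_10_general f tp hf hf0 hf1 (by norm_num [hf2]) htp htp0).congr_left fun x ↦ ?_
  rw [hf2, sqrt_quarter]
  ring
end

section
/- With $f$, $t_+$ as in the context: $\dfrac{2}{t_+(x)^3\, f'(t_+(x))^2} + \dfrac{f''(t_+(x))}{t_+(x)^2\, f'(t_+(x))^3} = \dfrac{3}{8 x^{5/2}} + O\big(x^{-3/2}\big)$ as $x \to 0^+$. (This quantity is the second derivative $\Theta_{x_2 x_2}((0,x),(1,0))$ of the Funk metric, via $\Theta_{x_2x_2} = 2\Theta^3 r_{x_2}^2 - \Theta^2 r_{x_2x_2}$.) -/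
open Filter Topology Asymptotics

/-! Put `a = f''(0)` and `b = f'''(0)`. As `t → 0⁺`, Taylor's formula expands `f''(t)`, `f'(t) / t`
and `f(t) / t ^ 2` to first order with error `O(t ^ 2)`. After multiplication by `t ^ 5`, the second
derivative of the Funk metric and `f(t) ^ (-5/2)` are smooth functions of these three, and their
first order expansions turn out to be proportional: one factor `3 √(2a) / 8` matches both the
constants and the coefficients of `t`, whatever `b` is. The difference is thus
`O(t ^ 2 / t ^ 5) = O(f(t) ^ (-3/2))`, and it remains to substitute `t = t₊(x)`. -/

theorem taylor_isBigO_of_contDiffAt_s12 {E : Type*} [NormedAddCommGroup E] [NormedSpace ℝ E]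
    {f : ℝ → E} {x₀ : ℝ} {n : ℕ} (hf : ContDiffAt ℝ (n + 1 : ℕ) f x₀) :
    (fun x => f x - ∑ k ∈ Finset.range (n + 1),
        ((k.factorial : ℝ)⁻¹ * (x - x₀) ^ k) • iteratedDeriv k f x₀)
      =O[𝓝 x₀] fun x => (x - x₀) ^ (n + 1) := by
  obtain ⟨u, hu, hfu⟩ := hf.contDiffOn le_rfl (by simp)
  obtain ⟨ε, hε, hball⟩ := Metric.mem_nhds_iff.mp (by simpa using hu)
  have hx₀ : x₀ ∈ Metric.ball x₀ ε := Metric.mem_ball_self hε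
  have hlittle := taylor_isLittleO (convex_ball x₀ ε) hx₀ (hfu.mono hball)
  rw [Metric.isOpen_ball.nhdsWithin_eq hx₀] at hlittle
  have hlast : (fun x => (((n + 1).factorial : ℝ)⁻¹ * (x - x₀) ^ (n + 1)) •
      iteratedDeriv (n + 1) f x₀) =O[𝓝 x₀] fun x => (x - x₀) ^ (n + 1) := by
    simpa using ((isBigO_refl (fun x : ℝ => (x - x₀) ^ (n + 1)) (𝓝 x₀)).const_mul_left
      ((n + 1).factorial : ℝ)⁻¹).smul
        (isBigO_const_const (iteratedDeriv (n + 1) f x₀) (one_ne_zero (α := ℝ)) (𝓝 x₀))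
  refine (hlittle.isBigO.add hlast).congr_left fun x => ?_
  simp only [taylor_within_apply, iteratedDerivWithin_of_isOpen Metric.isOpen_ball hx₀]
  rw [Finset.sum_range_succ _ (n + 1)]
  abel

/-- `g t = p + q * t + O(t ^ 2)` along the filter `l`, which is meant to be finer than `𝓝 0`. The
coefficients need not be `g 0` and `deriv g 0`, so that quotients such as `f t / t ^ 2` are covered
on punctured neighbourhoods of `0`. -/
def HasLinearExpansion (l : Filter ℝ) (g : ℝ → ℝ) (p q : ℝ) : Prop :=
  (fun t => g t - (p + q * t)) =O[l] fun t => t ^ 2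

namespace HasLinearExpansion

variable {l : Filter ℝ} {g h : ℝ → ℝ} {p q p' q' : ℝ}

theorem mono {l' : Filter ℝ} (hg : HasLinearExpansion l g p q) (hl : l' ≤ l) :
    HasLinearExpansion l' g p q :=
  IsBigO.mono hg hl

theorem add (hg : HasLinearExpansion l g p q) (hh : HasLinearExpansion l h p' q') :
    HasLinearExpansion l (fun t => g t + h t) (p + p') (q + q') :=
  (IsBigO.add hg hh).congr_left fun t => by ring

theorem const_mul (hg : HasLinearExpansion l g p q) (c : ℝ) :
    HasLinearExpansion l (fun t => c * g t) (c * p) (c * q) :=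
  (IsBigO.const_mul_left hg c).congr_left fun t => by ring

theorem sub (hg : HasLinearExpansion l g p q) (hh : HasLinearExpansion l h p' q') :
    HasLinearExpansion l (fun t => g t - h t) (p - p') (q - q') :=
  (IsBigO.sub hg hh).congr_left fun t => by ring

theorem isBigO_sub_const (hg : HasLinearExpansion l g p q) (hl : l ≤ 𝓝 0) :
    (fun t => g t - p) =O[l] fun t => t := by
  have hsq : (fun t : ℝ => t ^ 2) =O[l] fun t => t :=
    ((isLittleO_pow_id one_lt_two).mono hl).isBigO
  exact ((IsBigO.trans hg hsq).add ((isBigO_refl (fun t : ℝ => t) l).const_mul_left q)).congr_left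
    fun t => by ring

theorem tendsto (hg : HasLinearExpansion l g p q) (hl : l ≤ 𝓝 0) : Tendsto g l (𝓝 p) :=
  tendsto_sub_nhds_zero_iff.mp ((hg.isBigO_sub_const hl).trans_tendsto hl)

theorem mul (hg : HasLinearExpansion l g p q) (hh : HasLinearExpansion l h p' q')
    (hl : l ≤ 𝓝 0) :
    HasLinearExpansion l (fun t => g t * h t) (p * p') (p * q' + q * p') := by
  have hcross : (fun t => (g t - p) * (h t - p')) =O[l] fun t => t ^ 2 := by
    simpa only [pow_two] using (hg.isBigO_sub_const hl).mul (hh.isBigO_sub_const hl)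
  refine ((hcross.add (IsBigO.const_mul_left hg p')).add
    (IsBigO.const_mul_left hh p)).congr_left fun t => ?_
  ring

theorem comp {φ : ℝ → ℝ} {φ' : ℝ} (hg : HasLinearExpansion l g p q) (hl : l ≤ 𝓝 0)
    (hφ : ContDiffAt ℝ 2 φ p) (hφ' : HasDerivAt φ φ' p) :
    HasLinearExpansion l (fun t => φ (g t)) (φ p) (φ' * q) := by
  have htaylor : (fun y => φ y - (φ p + (y - p) * φ')) =O[𝓝 p] fun y => (y - p) ^ 2 := by
    simpa [Finset.sum_range_succ, hφ'.deriv] using taylor_isBigO_of_contDiffAt_s12 (n := 1) hφ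
  have hremainder := (htaylor.comp_tendsto (hg.tendsto hl)).trans
    ((hg.isBigO_sub_const hl).pow 2)
  refine (hremainder.add (IsBigO.const_mul_left hg φ')).congr_left fun t => ?_
  simp only [Function.comp_apply]
  ring

theorem inv (hg : HasLinearExpansion l g p q) (hl : l ≤ 𝓝 0) (hp : p ≠ 0) :
    HasLinearExpansion l (fun t => (g t)⁻¹) p⁻¹ (-(p ^ 2)⁻¹ * q) :=
  hg.comp hl (contDiffAt_inv ℝ hp) (hasDerivAt_inv hp)

theorem pow (hg : HasLinearExpansion l g p q) (hl : l ≤ 𝓝 0) (n : ℕ) :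
    HasLinearExpansion l (fun t => g t ^ n) (p ^ n) (n * p ^ (n - 1) * q) :=
  hg.comp hl (contDiffAt_id.pow n) (hasDerivAt_pow n p)

theorem rpow_const (hg : HasLinearExpansion l g p q) (hl : l ≤ 𝓝 0) (hp : p ≠ 0) (s : ℝ) :
    HasLinearExpansion l (fun t => g t ^ s) (p ^ s) (s * p ^ (s - 1) * q) :=
  hg.comp hl (Real.contDiffAt_rpow_const_of_ne hp) (Real.hasDerivAt_rpow_const (Or.inl hp))

end HasLinearExpansion

theorem hasLinearExpansion_div_pow {g : ℝ → ℝ} {k : ℕ} (hg : ContDiffAt ℝ (k + 2 : ℕ) g 0)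
    (hvanish : ∀ i < k, iteratedDeriv i g 0 = 0) :
    HasLinearExpansion (𝓝[≠] 0) (fun t => g t / t ^ k)
      (iteratedDeriv k g 0 / k.factorial) (iteratedDeriv (k + 1) g 0 / (k + 1).factorial) := by
  have htaylor := (taylor_isBigO_of_contDiffAt_s12 (n := k + 1) hg).mono
    (nhdsWithin_le_nhds (s := {(0 : ℝ)}ᶜ))
  have hlow (t : ℝ) : ∑ i ∈ Finset.range k,
      (i.factorial : ℝ)⁻¹ * t ^ i * iteratedDeriv i g 0 = 0 :=
    Finset.sum_eq_zero fun i hi => by rw [hvanish i (Finset.mem_range.mp hi), mul_zero]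
  simp only [sub_zero, Finset.sum_range_succ, smul_eq_mul, hlow, zero_add] at htaylor
  refine (htaylor.mul (isBigO_refl (fun t : ℝ => (t ^ k)⁻¹) _)).congr' ?_ ?_ <;>
    filter_upwards [self_mem_nhdsWithin] with t (ht : t ≠ 0)
  · field_simp
    ring
  · field_simp
    ring

theorem sqrt_two_mul_mul_half_rpow {a : ℝ} (ha : 0 < a) :
    √(2 * a) * (a / 2) ^ (-(5 / 2) : ℝ) = 8 / a ^ 2 := by
  have hrpow : (a / 2) ^ (-(5 / 2) : ℝ) = √(a / 2) / (a / 2) ^ 3 := by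
    rw [Real.sqrt_eq_rpow, ← Real.rpow_natCast, ← Real.rpow_sub (by positivity)]
    norm_num
  have hsqrt : √(2 * a) * √(a / 2) = a := by
    rw [← Real.sqrt_mul (by positivity), show 2 * a * (a / 2) = a ^ 2 by ring,
      Real.sqrt_sq ha.le]
  rw [hrpow, ← mul_div_assoc, hsqrt]
  field_simp
  norm_num

theorem two_mul_inv_sq_add_mul_inv_cube_sub_rpow_isBigO_sq {l : Filter ℝ} {u v w : ℝ → ℝ}
    {a b : ℝ} (hl : l ≤ 𝓝 0) (ha : 0 < a) (hu : HasLinearExpansion l u a (b / 2))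
    (hv : HasLinearExpansion l v a b) (hw : HasLinearExpansion l w (a / 2) (b / 6)) :
    (fun t => 2 * (u t)⁻¹ ^ 2 + v t * (u t)⁻¹ ^ 3 - 3 * √(2 * a) / 8 * w t ^ (-(5 / 2) : ℝ))
      =O[l] fun t => t ^ 2 := by
  have hu_inv := hu.inv hl ha.ne'
  have hsq : HasLinearExpansion l (fun t => 2 * (u t)⁻¹ ^ 2) (2 / a ^ 2) (-(2 * b / a ^ 3)) := by
    convert (hu_inv.pow hl 2).const_mul 2 using 1 <;> push_cast <;> field_simp
  have hcube : HasLinearExpansion l (fun t => v t * (u t)⁻¹ ^ 3) (1 / a ^ 2)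
      (-(b / (2 * a ^ 3))) := by
    convert hv.mul (hu_inv.pow hl 3) hl using 1 <;> push_cast <;> field_simp
    norm_num
  have hrpow : HasLinearExpansion l (fun t => 3 * √(2 * a) / 8 * w t ^ (-(5 / 2) : ℝ))
      (3 / a ^ 2) (-(5 * b / (2 * a ^ 3))) := by
    have hscale := sqrt_two_mul_mul_half_rpow ha
    convert (hw.rpow_const hl (half_pos ha).ne' (-(5 / 2))).const_mul (3 * √(2 * a) / 8) using 1
    · linear_combination (-(3 / 8)) * hscale
    · rw [Real.rpow_sub_one (half_pos ha).ne']
      linear_combination (5 / 16 * b / a) * hscale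
  exact IsBigO.congr_left ((hsq.add hcube).sub hrpow) fun t => by ring

theorem isTheta_rpow_of_tendsto_div_pow {f : ℝ → ℝ} {n : ℕ} {p : ℝ} (hp : 0 < p)
    (hf : Tendsto (fun t => f t / t ^ n) (𝓝[>] 0) (𝓝 p)) (s : ℝ) :
    (fun t => f t ^ s) =Θ[𝓝[>] 0] fun t => t ^ (n * s) := by
  have hpos : ∀ᶠ t : ℝ in 𝓝[>] 0, 0 < t := self_mem_nhdsWithin
  have hf_nonneg : 0 ≤ᶠ[𝓝[>] 0] f := by
    filter_upwards [hpos, hf.eventually_const_lt hp] with t ht hft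
    exact ((div_pos_iff_of_pos_right (pow_pos ht n)).mp hft).le
  have hpow_nonneg : 0 ≤ᶠ[𝓝[>] 0] fun t : ℝ => t ^ n :=
    hpos.mono fun t ht => (pow_pos ht n).le
  refine ((isTheta_of_div_tendsto_nhds_ne_zero hf hp.ne').symm.rpow hf_nonneg
    hpow_nonneg).trans_eventuallyEq ?_
  filter_upwards [hpos] with t ht
  rw [← Real.rpow_natCast_mul ht.le]

/-- The second derivative `Θ_{x₂x₂}((0, x), (1, 0))` of the Funk metric of the region above the
graph of `f`, in terms of `t = t₊(x)`. It is `d²/dx²` of `1 / t₊(x)`, evaluated by differentiating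
`f (t₊(x)) = x`. -/
noncomputable def funkSecondDeriv (f : ℝ → ℝ) (t : ℝ) : ℝ :=
  2 / (t ^ 3 * deriv f t ^ 2) + deriv (deriv f) t / (t ^ 2 * deriv f t ^ 3)

theorem funkSecondDeriv_sub_eq {f : ℝ → ℝ} {t : ℝ} (c : ℝ) (ht : 0 < t) (hft : 0 ≤ f t) :
    funkSecondDeriv f t - c / f t ^ (5 / 2 : ℝ) =
      (2 * (deriv f t / t)⁻¹ ^ 2 + deriv (deriv f) t * (deriv f t / t)⁻¹ ^ 3 -
        c * (f t / t ^ 2) ^ (-(5 / 2) : ℝ)) * (t ^ 5)⁻¹ := by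
  have hrpow : (f t / t ^ 2) ^ (-(5 / 2) : ℝ) = t ^ 5 / f t ^ (5 / 2 : ℝ) := by
    rw [Real.rpow_neg (by positivity), Real.div_rpow hft (by positivity), inv_div,
      ← Real.rpow_natCast_mul ht.le, ← Real.rpow_natCast t 5]
    norm_num
  rw [hrpow, funkSecondDeriv]
  field_simp

theorem funkSecondDeriv_sub_isBigO {f : ℝ → ℝ} {a : ℝ} (ha : 0 < a)
    (hf : ContDiffAt ℝ 4 f 0) (hf0 : f 0 = 0) (hf1 : deriv f 0 = 0) (hf2 : deriv (deriv f) 0 = a) :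
    (fun t => funkSecondDeriv f t - 3 * √(2 * a) / 8 / f t ^ (5 / 2 : ℝ))
      =O[𝓝[>] 0] fun t => f t ^ (-(3 / 2) : ℝ) := by
  have hl : 𝓝[>] (0 : ℝ) ≤ 𝓝 0 := nhdsWithin_le_nhds
  have hf' : ContDiffAt ℝ 3 (deriv f) 0 := hf.derivWithin (by norm_num)
  have hf'' : ContDiffAt ℝ 2 (deriv (deriv f)) 0 := hf'.derivWithin (by norm_num)
  have hv : HasLinearExpansion (𝓝[>] 0) (deriv (deriv f)) a (deriv (deriv (deriv f)) 0) := by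
    simpa [hf2] using
      (hasLinearExpansion_div_pow (k := 0) hf'' (by simp)).mono (nhdsGT_le_nhdsNE 0)
  have hu : HasLinearExpansion (𝓝[>] 0) (fun t => deriv f t / t) a
      (deriv (deriv (deriv f)) 0 / 2) := by
    simpa [iteratedDeriv_succ', hf2] using
      (hasLinearExpansion_div_pow (k := 1) hf' (by simpa using hf1)).mono (nhdsGT_le_nhdsNE 0)
  have hw : HasLinearExpansion (𝓝[>] 0) (fun t => f t / t ^ 2) (a / 2)
      (deriv (deriv (deriv f)) 0 / 6) := by
    have hvanish : ∀ i < 2, iteratedDeriv i f 0 = 0 := fun i hi => by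
      interval_cases i <;> simp [hf0, hf1]
    simpa [iteratedDeriv_succ', Nat.factorial, hf2] using
      (hasLinearExpansion_div_pow (k := 2) hf hvanish).mono (nhdsGT_le_nhdsNE 0)
  have hw_tendsto := hw.tendsto hl
  have hrescaled := (two_mul_inv_sq_add_mul_inv_cube_sub_rpow_isBigO_sq hl ha hu hv hw).mul
    (isBigO_refl (fun t : ℝ => (t ^ 5)⁻¹) (𝓝[>] 0))
  refine (hrescaled.congr' ?_ ?_).trans
    (isTheta_rpow_of_tendsto_div_pow (half_pos ha) hw_tendsto (-(3 / 2))).isBigO_symm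
  · filter_upwards [self_mem_nhdsWithin, hw_tendsto.eventually_const_lt (half_pos ha)]
      with t (ht : 0 < t) hft
    exact (funkSecondDeriv_sub_eq _ ht
      ((div_pos_iff_of_pos_right (by positivity)).mp hft).le).symm
  · filter_upwards [self_mem_nhdsWithin] with t (ht : 0 < t)
    rw [show ((2 : ℕ) : ℝ) * -(3 / 2) = -(3 : ℕ) by norm_num, Real.rpow_neg ht.le,
      Real.rpow_natCast]
    field_simp

theorem stmt_12_general (f tp : ℝ → ℝ) {a : ℝ} (ha : 0 < a)
    (hf : ContDiffAt ℝ 4 f 0)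
    (hf0 : f 0 = 0) (hf1 : deriv f 0 = 0) (hf2 : deriv (deriv f) 0 = a)
    (htp : ∀ᶠ x in 𝓝[>] (0 : ℝ), 0 < tp x ∧ f (tp x) = x)
    (htp0 : Tendsto tp (𝓝[>] (0 : ℝ)) (𝓝 0)) :
    (fun x => funkSecondDeriv f (tp x) - 3 * √(2 * a) / (8 * x ^ (5 / 2 : ℝ)))
      =O[𝓝[>] (0 : ℝ)] fun x => x ^ (-(3 / 2) : ℝ) := by
  have htp_right : Tendsto tp (𝓝[>] 0) (𝓝[>] 0) :=
    tendsto_nhdsWithin_iff.mpr ⟨htp0, htp.mono fun x hx => hx.1⟩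
  refine ((funkSecondDeriv_sub_isBigO ha hf hf0 hf1 hf2).comp_tendsto htp_right).congr' ?_ ?_ <;>
    filter_upwards [htp] with x hx <;>
    simp only [Function.comp_apply, hx.2, div_div]

theorem stmt_12 (f tp tm : ℝ → ℝ)
    (hf : ContDiffAt ℝ 4 f 0)
    (hf0 : f 0 = 0) (hf1 : deriv f 0 = 0) (hf2 : deriv (deriv f) 0 = 1/2)
    (hfpos : ∀ᶠ t in 𝓝 (0:ℝ), 0 < deriv (deriv f) t)
    (htp : ∀ᶠ x in 𝓝[>] (0:ℝ), 0 < tp x ∧ f (tp x) = x)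
    (htm : ∀ᶠ x in 𝓝[>] (0:ℝ), tm x < 0 ∧ f (tm x) = x)
    (htp0 : Tendsto tp (𝓝[>] (0:ℝ)) (𝓝 0))
    (htm0 : Tendsto tm (𝓝[>] (0:ℝ)) (𝓝 0)) :
    (fun x => 2 / ((tp x) ^ 3 * (deriv f (tp x)) ^ 2)
        + deriv (deriv f) (tp x) / ((tp x) ^ 2 * (deriv f (tp x)) ^ 3)
        - 3 / (8 * x ^ (5/2 : ℝ)))
      =O[𝓝[>] (0:ℝ)] fun x => x ^ (-(3/2) : ℝ) := by
  have hgeneral := stmt_12_general f tp one_half_pos hf hf0 hf1 hf2 htp htp0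
  exact hgeneral.congr_left fun x => by simp [funkSecondDeriv]
end
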